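/- arXiv:2004.07096 — 2 statements merged into one kernel-verified Lean document; each statement's English description precedes it below -/
import Mathlib

section
/- Let 0 < m ≤ 1. There exists a constant c = c(m) > 0 such that for all u, a, ψ ∈ ℝ with ψ ≤ u one has |u − a| (ψ^m − a^m)_+ ≤ c |u^((1+m)/2) − a^((1+m)/2)|². -/
/-- Signed power: `a^k := |a|^(k-1) a`. -/
noncomputable def spow (a k : ℝ) : ℝ := |a| ^ (k - 1) * a

/-!
Write `p = 1` and `q = m`. If `a < ψ ≤ u`, monotonicity of the signed power
allows replacing `ψ` by `u`; otherwise the left-hand side vanishes. For `x, y ≥ 0` and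
`r = (p + q) / 2`, AM-GM and rearrangement give
`2 x ^ r y ^ r ≤ x ^ p y ^ q + x ^ q y ^ p ≤ x ^ (2 r) + y ^ (2 r)`.
If `u` and `a` have the same sign, expand the product of differences and use the left inequality.
If they have opposite signs, the differences become sums of powers of `|u|` and `|a|`, and the right
inequality applies, at the cost of a factor `2`.
-/

section Rpow

variable {x y p q : ℝ}

lemma sq_rpow_add_div_two (hx : 0 ≤ x) (hp : 0 ≤ p) (hq : 0 ≤ q) :
    (x ^ ((p + q) / 2)) ^ 2 = x ^ p * x ^ q := by
  rw [← Real.rpow_mul_natCast hx, ← Real.rpow_add_of_nonneg hx hp hq, Nat.cast_ofNat,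
    div_mul_cancel₀ _ two_ne_zero]

lemma two_mul_rpow_mul_rpow_le (hx : 0 ≤ x) (hy : 0 ≤ y) (hp : 0 ≤ p) (hq : 0 ≤ q) :
    2 * (x ^ ((p + q) / 2) * y ^ ((p + q) / 2)) ≤ x ^ p * y ^ q + x ^ q * y ^ p := by
  refine two_mul_le_add_of_sq_le_mul (by positivity) (by positivity) (le_of_eq ?_)
  rw [mul_pow, sq_rpow_add_div_two hx hp hq, sq_rpow_add_div_two hy hp hq]
  ring

lemma rpow_mul_rpow_add_rpow_mul_rpow_le (hx : 0 ≤ x) (hy : 0 ≤ y) (hp : 0 ≤ p) (hq : 0 ≤ q) :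
    x ^ p * y ^ q + x ^ q * y ^ p ≤ x ^ p * x ^ q + y ^ p * y ^ q := by
  wlog hxy : x ≤ y generalizing x y
  · linarith [this hy hx (le_of_not_ge hxy)]
  linarith [mul_add_mul_le_mul_add_mul (Real.rpow_le_rpow hx hxy hp) (Real.rpow_le_rpow hx hxy hq)]

lemma rpow_sub_mul_rpow_sub_le (hx : 0 ≤ x) (hy : 0 ≤ y) (hp : 0 ≤ p) (hq : 0 ≤ q) :
    (x ^ p - y ^ p) * (x ^ q - y ^ q) ≤ (x ^ ((p + q) / 2) - y ^ ((p + q) / 2)) ^ 2 := by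
  rw [sub_sq, sq_rpow_add_div_two hx hp hq, sq_rpow_add_div_two hy hp hq]
  linarith [two_mul_rpow_mul_rpow_le hx hy hp hq]

lemma rpow_add_mul_rpow_add_le (hx : 0 ≤ x) (hy : 0 ≤ y) (hp : 0 ≤ p) (hq : 0 ≤ q) :
    (x ^ p + y ^ p) * (x ^ q + y ^ q) ≤ 2 * (x ^ ((p + q) / 2) + y ^ ((p + q) / 2)) ^ 2 := by
  have cross_nonneg : 0 ≤ x ^ ((p + q) / 2) * y ^ ((p + q) / 2) := by positivity
  rw [add_sq, sq_rpow_add_div_two hx hp hq, sq_rpow_add_div_two hy hp hq]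
  linarith [rpow_mul_rpow_add_rpow_mul_rpow_le hx hy hp hq]

end Rpow

section Spow

lemma spow_one (x : ℝ) : spow x 1 = x := by
  simp [spow]

lemma spow_neg (x k : ℝ) : spow (-x) k = -spow x k := by
  simp [spow]

variable {x k p q : ℝ}

lemma spow_of_nonneg (hx : 0 ≤ x) (hk : 0 < k) : spow x k = x ^ k := by
  rcases hx.eq_or_lt with rfl | hx
  · simp [spow, Real.zero_rpow hk.ne']
  · rw [spow, abs_of_pos hx, Real.rpow_sub_one hx.ne', div_mul_cancel₀ _ hx.ne']

lemma spow_of_nonpos (hx : x ≤ 0) (hk : 0 < k) : spow x k = -(-x) ^ k := by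
  rw [← spow_of_nonneg (neg_nonneg.2 hx) hk, spow_neg, neg_neg]

lemma monotone_spow (hk : 0 < k) : Monotone (spow · k) := by
  refine monotone_of_odd_of_monotoneOn_nonneg (spow_neg · k) fun x hx y hy hxy => ?_
  simpa only [spow_of_nonneg hx hk, spow_of_nonneg hy hk] using Real.rpow_le_rpow hx hxy hk.le

lemma spow_sub_mul_spow_sub_le (hp : 0 < p) (hq : 0 < q) (u a : ℝ) :
    (spow u p - spow a p) * (spow u q - spow a q) ≤
      2 * (spow u ((p + q) / 2) - spow a ((p + q) / 2)) ^ 2 := by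
  have hr : 0 < (p + q) / 2 := by positivity
  wlog hu : 0 ≤ u generalizing u a
  · have reflected := this (-u) (-a) (neg_nonneg.2 (le_of_not_ge hu))
    simp only [spow_neg] at reflected
    linarith
  simp only [spow_of_nonneg hu, hp, hq, hr]
  rcases le_total 0 a with ha | ha
  · simp only [spow_of_nonneg ha, hp, hq, hr]
    exact (rpow_sub_mul_rpow_sub_le hu ha hp.le hq.le).trans
      (le_mul_of_one_le_left (sq_nonneg _) one_le_two)
  · simp only [spow_of_nonpos ha, hp, hq, hr, sub_neg_eq_add]
    exact rpow_add_mul_rpow_add_le hu (neg_nonneg.2 ha) hp.le hq.le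

end Spow

theorem obstacle_difference_estimate_general {p q : ℝ} (hp : 0 < p) (hq : 0 < q)
    {u a ψ : ℝ} (hψ : ψ ≤ u) :
    |spow u p - spow a p| * max (spow ψ q - spow a q) 0 ≤
      2 * |spow u ((p + q) / 2) - spow a ((p + q) / 2)| ^ 2 := by
  rw [sq_abs]
  rcases le_total ψ a with hψa | haψ
  · rw [max_eq_right (sub_nonpos.2 (monotone_spow hq hψa)), mul_zero]
    positivity
  · have spow_sub_nonneg : 0 ≤ spow u p - spow a p :=
      sub_nonneg.2 (monotone_spow hp (haψ.trans hψ))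
    rw [abs_of_nonneg spow_sub_nonneg, max_eq_left (sub_nonneg.2 (monotone_spow hq haψ))]
    calc (spow u p - spow a p) * (spow ψ q - spow a q)
        ≤ (spow u p - spow a p) * (spow u q - spow a q) := by
          gcongr
          exact monotone_spow hq hψ
      _ ≤ 2 * (spow u ((p + q) / 2) - spow a ((p + q) / 2)) ^ 2 :=
          spow_sub_mul_spow_sub_le hp hq u a

/-- For `0 < m ≤ 1` there is `c = c(m) > 0` such that for all `u, a, ψ ∈ ℝ` with `ψ ≤ u`:
`|u − a| (ψ^m − a^m)_+ ≤ c |u^((1+m)/2) − a^((1+m)/2)|²`. -/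
theorem obstacle_difference_estimate (m : ℝ) (hm0 : 0 < m) (hm1 : m ≤ 1) :
    ∃ c : ℝ, 0 < c ∧ ∀ u a ψ : ℝ, ψ ≤ u →
      |u - a| * max (spow ψ m - spow a m) 0 ≤
        c * |spow u ((1 + m) / 2) - spow a ((1 + m) / 2)| ^ 2 := by
  refine ⟨2, two_pos, fun u a ψ hψ => ?_⟩
  simpa only [spow_one] using obstacle_difference_estimate_general one_pos hm0 (a := a) hψ
end

section
/- Let 0 < m ≤ 1. There exists a constant c = c(m) > 0 such that for all u, a ∈ ℝ one has |u − a|^(1+m) ≤ c |u^((1+m)/2) − a^((1+m)/2)|² + c |a|^(1+m). -/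
/-!
Since `|spow x (p / 2)|² = |x|^p`, adding and subtracting `spow a (p / 2)` bounds `|u|^p` by
`2 |spow u (p / 2) - spow a (p / 2)|² + 2 |a|^p`. This
is inserted, with `p = 1 + m`, into `|u - a|^p ≤ (|u| + |a|)^p ≤ 2^p (|u|^p + |a|^p)`.
-/

theorem add_rpow_le_two_rpow_mul_rpow_add_rpow {x y p : ℝ} (hx : 0 ≤ x) (hy : 0 ≤ y)
    (hp : 0 ≤ p) : (x + y) ^ p ≤ 2 ^ p * (x ^ p + y ^ p) := by
  lift x to NNReal using hx
  lift y to NNReal using hy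
  have h := ENNReal.add_rpow_le_two_rpow_mul_rpow_add_rpow x y hp
  rw [← ENNReal.coe_ofNat] at h
  simp only [← ENNReal.coe_add, ← ENNReal.coe_rpow_of_nonneg _ hp, ← ENNReal.coe_mul,
    ENNReal.coe_le_coe] at h
  exact_mod_cast h

theorem abs_spow {k : ℝ} (hk : k ≠ 0) (x : ℝ) : |spow x k| = |x| ^ k := by
  rw [spow, abs_mul, Real.abs_rpow_of_nonneg (abs_nonneg x), abs_abs]
  simpa using (Real.rpow_add_one' (abs_nonneg x) (y := k - 1) (by simpa using hk)).symm

theorem spow_half_sq {p : ℝ} (hp : p ≠ 0) (x : ℝ) : spow x (p / 2) ^ 2 = |x| ^ p := by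
  rw [← sq_abs, abs_spow (by simpa using hp), ← Real.rpow_mul_natCast (abs_nonneg x)]
  simp

theorem abs_rpow_le_two_mul_spow_half_sub_sq_add {p : ℝ} (hp : p ≠ 0) (u a : ℝ) :
    |u| ^ p ≤ 2 * (spow u (p / 2) - spow a (p / 2)) ^ 2 + 2 * |a| ^ p :=
  calc |u| ^ p = (spow u (p / 2) - spow a (p / 2) + spow a (p / 2)) ^ 2 := by
        rw [sub_add_cancel, spow_half_sq hp]
    _ ≤ 2 * ((spow u (p / 2) - spow a (p / 2)) ^ 2 + spow a (p / 2) ^ 2) := add_sq_le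
    _ = 2 * (spow u (p / 2) - spow a (p / 2)) ^ 2 + 2 * |a| ^ p := by
        rw [spow_half_sq hp, mul_add]

theorem elementary_power_estimate_general {m : ℝ} (hm : -1 < m) (u a : ℝ) :
    |u - a| ^ (1 + m) ≤
      3 * 2 ^ (1 + m) * |spow u ((1 + m) / 2) - spow a ((1 + m) / 2)| ^ 2 +
        3 * 2 ^ (1 + m) * |a| ^ (1 + m) := by
  have hp : 0 < 1 + m := by linarith
  have hu : |u| ^ (1 + m) + |a| ^ (1 + m) ≤
      3 * |spow u ((1 + m) / 2) - spow a ((1 + m) / 2)| ^ 2 + 3 * |a| ^ (1 + m) := by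
    rw [sq_abs]
    linarith [abs_rpow_le_two_mul_spow_half_sub_sq_add hp.ne' u a,
      sq_nonneg (spow u ((1 + m) / 2) - spow a ((1 + m) / 2))]
  calc |u - a| ^ (1 + m) ≤ (|u| + |a|) ^ (1 + m) := by
        gcongr
        exact abs_sub u a
    _ ≤ 2 ^ (1 + m) * (|u| ^ (1 + m) + |a| ^ (1 + m)) :=
        add_rpow_le_two_rpow_mul_rpow_add_rpow (abs_nonneg u) (abs_nonneg a) hp.le
    _ ≤ 2 ^ (1 + m) * (3 * |spow u ((1 + m) / 2) - spow a ((1 + m) / 2)| ^ 2 +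
          3 * |a| ^ (1 + m)) := by gcongr
    _ = 3 * 2 ^ (1 + m) * |spow u ((1 + m) / 2) - spow a ((1 + m) / 2)| ^ 2 +
          3 * 2 ^ (1 + m) * |a| ^ (1 + m) := by ring

/-- For `0 < m ≤ 1` there is `c = c(m) > 0` such that for all `u, a ∈ ℝ`:
`|u − a|^(1+m) ≤ c |u^((1+m)/2) − a^((1+m)/2)|² + c |a|^(1+m)`. -/
theorem elementary_power_estimate (m : ℝ) (hm0 : 0 < m) (hm1 : m ≤ 1) :
    ∃ c : ℝ, 0 < c ∧ ∀ u a : ℝ,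
      |u - a| ^ (1 + m) ≤
        c * |spow u ((1 + m) / 2) - spow a ((1 + m) / 2)| ^ 2 + c * |a| ^ (1 + m) :=
  ⟨3 * 2 ^ (1 + m), by positivity, elementary_power_estimate_general (by linarith)⟩
end
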